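/- Let n = 5k with k ≥ 2 an integer. Consider the position of n-Sim in which the n vertices are partitioned into k sets of 5 vertices, the complete graph on each of these 5-sets is colored as a drawn K_5, all edges joining vertices in different 5-sets are uncolored, and it is PI's turn to move. Then PII has a winning strategy from this position. -/

import Mathlib

/-- The set of valid (non-loop) edges of the complete graph on `Fin n`. -/
def simEdges (n : ℕ) : Finset (Sym2 (Fin n)) :=
  Finset.univ.filter (fun e => ¬ e.IsDiag)

/-- An edge set `S` contains a triangle: three edges of `S` spanned by three
distinct vertices. -/
def HasTriangle {n : ℕ} (S : Finset (Sym2 (Fin n))) : Prop :=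
  ∃ a b c : Fin n, a ≠ b ∧ a ≠ c ∧ b ≠ c ∧
    s(a, b) ∈ S ∧ s(a, c) ∈ S ∧ s(b, c) ∈ S

/-- The uncolored edges, given the two players' edge sets. -/
def avail {n : ℕ} (A B : Finset (Sym2 (Fin n))) : Finset (Sym2 (Fin n)) :=
  simEdges n \ (A ∪ B)

/-- `MoverWins own opp` : in the game of n-Sim (players alternately claim an
uncolored edge of `K n`, and whoever first has a triangle in their own edges
loses), the player about to move, whose already-claimed edges are `own` while
the opponent's are `opp`, has a winning strategy.

The mover wins iff they can claim some uncolored edge `e` not creating a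
triangle in their own color, so that afterwards the opponent still has to move
(there is an uncolored edge left; otherwise the game is a draw), and every
reply `f` of the opponent either completes a triangle in the opponent's color
(so the opponent loses) or leads to a position where the original mover again
wins. -/
inductive MoverWins {n : ℕ} : Finset (Sym2 (Fin n)) → Finset (Sym2 (Fin n)) → Prop where
  | step (own opp : Finset (Sym2 (Fin n))) (e : Sym2 (Fin n))
      (he : e ∈ avail own opp)
      (hsafe : ¬ HasTriangle (insert e own))
      (hne : (avail opp (insert e own)).Nonempty)
      (hreplies : ∀ f ∈ avail opp (insert e own), ¬ HasTriangle (insert f opp) →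
        MoverWins (insert e own) (insert f opp)) :
      MoverWins own opp

/-- `NonMoverWins own opp` : the player NOT about to move (the one whose edges
are `opp`) has a winning strategy: there is at least one uncolored edge (the
mover must move), and every non-losing move of the mover leads to a position
won by the (new) mover, i.e. by the original non-mover. -/
def NonMoverWins {n : ℕ} (own opp : Finset (Sym2 (Fin n))) : Prop :=
  (avail own opp).Nonempty ∧
    ∀ e ∈ avail own opp, ¬ HasTriangle (insert e own) →
      MoverWins opp (insert e own)

/-- The green edges of a drawn `K₅` on the five distinct vertices
`v 0, …, v 4`: the pentagon `v i — v (i+1)`. -/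
def greenK5 {n : ℕ} (v : Fin 5 → Fin n) : Finset (Sym2 (Fin n)) :=
  Finset.univ.image (fun i : Fin 5 => s(v i, v (i + 1)))

/-- The red edges of a drawn `K₅` on the five distinct vertices
`v 0, …, v 4`: the complementary pentagram `v i — v (i+2)`. -/
def redK5 {n : ℕ} (v : Fin 5 → Fin n) : Finset (Sym2 (Fin n)) :=
  Finset.univ.image (fun i : Fin 5 => s(v i, v (i + 2)))

/-!
Since `R(3,3) = 6`, the game on at least six vertices has no draws, so one of the players wins
every position. Suppose that after PI's opening move `e` it is PI who wins. Doubling the labels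
of each pentagon, `t ↦ 2 t + a`, exchanges the two colors, and `a` can be chosen separately in
each block so that the exchange fixes one endpoint of `e` and moves the other to the next vertex of
its green pentagon. The image `c` of `e` then closes a green triangle with `e`, so PI can never take
it, and PI still wins after `c` is given to PII for free. The position is now `R ∪ {c}` against
`G ∪ {e}` with PII to move. But exchanging the colors in the supposed win of PI shows that PII wins
with `R ∪ {c}` against `G` and PI to move, in particular if PI moves `e`: a contradiction.
-/

section Game

variable {n : ℕ} {S T own opp : Finset (Sym2 (Fin n))} {e : Sym2 (Fin n)}

theorem HasTriangle.mono (hS : HasTriangle S) (hST : S ⊆ T) : HasTriangle T := by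
  obtain ⟨a, b, c, hab, hac, hbc, h₁, h₂, h₃⟩ := hS
  exact ⟨a, b, c, hab, hac, hbc, hST h₁, hST h₂, hST h₃⟩

theorem mem_avail : e ∈ avail S T ↔ ¬ e.IsDiag ∧ e ∉ S ∧ e ∉ T := by
  simp [avail, simEdges]

theorem mk_mem_avail {a b : Fin n} :
    s(a, b) ∈ avail S T ↔ a ≠ b ∧ s(a, b) ∉ S ∧ s(a, b) ∉ T := by
  rw [mem_avail, Sym2.mk_isDiag_iff]

theorem avail_comm (S T : Finset (Sym2 (Fin n))) : avail S T = avail T S := by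
  rw [avail, avail, Finset.union_comm]

theorem card_avail_insert_lt (he : e ∈ avail own opp) :
    (avail opp (insert e own)).card < (avail own opp).card := by
  refine Finset.card_lt_card <| Finset.ssubset_iff_of_subset (fun f => ?_) |>.2
    ⟨e, he, by simp [mem_avail]⟩
  simp only [mem_avail, Finset.mem_insert]
  tauto

theorem moverWins_iff : MoverWins own opp ↔
    ∃ e ∈ avail own opp, ¬ HasTriangle (insert e own) ∧ NonMoverWins opp (insert e own) := by
  constructor
  · rintro ⟨_, _, e, he, hsafe, hne, hreplies⟩
    exact ⟨e, he, hsafe, hne, hreplies⟩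
  · rintro ⟨e, he, hsafe, hne, hreplies⟩
    exact .step own opp e he hsafe hne hreplies

theorem MoverWins.not_nonMoverWins (h : MoverWins own opp) : ¬ NonMoverWins own opp := by
  induction h with
  | step own opp e he hsafe _ _ ih =>
    intro hN
    obtain ⟨f, hf, hfsafe, hfN⟩ := moverWins_iff.1 (hN.2 e he hsafe)
    exact ih f hf hfsafe hfN

theorem hasTriangle_or_of_avail_eq_empty (h : avail S T = ∅) {x : Fin n} {N : Finset (Fin n)}
    (hN : ∀ a ∈ N, x ≠ a ∧ s(x, a) ∈ S) (hcard : 2 < N.card) :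
    HasTriangle S ∨ HasTriangle T := by
  obtain ⟨a, ha, b, hb, c, hc, hab, hac, hbc⟩ := Finset.two_lt_card.1 hcard
  by_contra! hST
  have mk_mem_T {p q : Fin n} (hp : p ∈ N) (hq : q ∈ N) (hpq : p ≠ q) : s(p, q) ∈ T := by
    by_contra hT
    have hS : s(p, q) ∉ S := fun hS =>
      hST.1 ⟨x, p, q, (hN p hp).1, (hN q hq).1, hpq, (hN p hp).2, (hN q hq).2, hS⟩
    exact Finset.eq_empty_iff_forall_notMem.1 h _ (mk_mem_avail.2 ⟨hpq, hS, hT⟩)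
  exact hST.2 ⟨a, b, c, hab, hac, hbc, mk_mem_T ha hb hab, mk_mem_T ha hc hac,
    mk_mem_T hb hc hbc⟩

theorem avail_nonempty (hn : 6 ≤ n) (hS : ¬ HasTriangle S) (hT : ¬ HasTriangle T) :
    (avail S T).Nonempty := by
  by_contra! h
  let x : Fin n := ⟨0, by omega⟩
  have hcard := Finset.card_filter_add_card_filter_not (s := Finset.univ.erase x)
    (fun a => s(x, a) ∈ S)
  rw [Finset.card_erase_of_mem (Finset.mem_univ x), Finset.card_univ, Fintype.card_fin] at hcard
  obtain hbig | hbig : 2 < ((Finset.univ.erase x).filter fun a => s(x, a) ∈ S).card ∨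
      2 < ((Finset.univ.erase x).filter fun a => s(x, a) ∉ S).card := by omega
  · refine (hasTriangle_or_of_avail_eq_empty (x := x) h (fun a ha => ?_) hbig).elim hS hT
    simp only [Finset.mem_filter, Finset.mem_erase] at ha
    exact ⟨ha.1.1.symm, ha.2⟩
  · refine (hasTriangle_or_of_avail_eq_empty (x := x) (avail_comm S T ▸ h) (fun a ha => ?_)
      hbig).elim hT hS
    simp only [Finset.mem_filter, Finset.mem_erase] at ha
    have hxa : x ≠ a := ha.1.1.symm
    refine ⟨hxa, by_contra fun haT => ?_⟩
    exact Finset.eq_empty_iff_forall_notMem.1 h _ (mk_mem_avail.2 ⟨hxa, ha.2, haT⟩)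

theorem moverWins_or_nonMoverWins (hn : 6 ≤ n) {own opp : Finset (Sym2 (Fin n))}
    (hown : ¬ HasTriangle own) (hopp : ¬ HasTriangle opp) :
    MoverWins own opp ∨ NonMoverWins own opp := by
  refine or_iff_not_imp_left.2 fun hM => ⟨avail_nonempty hn hown hopp, fun e he hsafe => ?_⟩
  refine (moverWins_or_nonMoverWins hn hopp hsafe).resolve_right fun hN => ?_
  exact hM (moverWins_iff.2 ⟨e, he, hsafe, hN⟩)
termination_by (avail own opp).card
decreasing_by exact card_avail_insert_lt he

-- The winning strategy never claims `c`, so it remains playable once `c` is taken away.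
theorem NonMoverWins.insert_own (hn : 6 ≤ n) {c : Sym2 (Fin n)}
    {own opp : Finset (Sym2 (Fin n))} (h : NonMoverWins own opp)
    (hopp : ¬ HasTriangle opp) (hdead : HasTriangle (insert c opp))
    (hsafe : ¬ HasTriangle (insert c own)) : NonMoverWins (insert c own) opp := by
  refine ⟨avail_nonempty hn hsafe hopp, fun e he hesafe => ?_⟩
  obtain ⟨hdiag, he', heopp⟩ := mem_avail.1 he
  have heavail : e ∈ avail own opp :=
    mem_avail.2 ⟨hdiag, fun heown => he' (Finset.mem_insert_of_mem heown), heopp⟩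
  have hsub : insert e own ⊆ insert e (insert c own) :=
    Finset.insert_subset_insert _ (Finset.subset_insert _ _)
  obtain ⟨f, hf, hfsafe, hfN⟩ := moverWins_iff.1 (h.2 e heavail fun ht => hesafe (ht.mono hsub))
  have hfc : f ≠ c := by
    rintro rfl
    exact hfsafe hdead
  have hwin : NonMoverWins (insert c (insert e own)) (insert f opp) :=
    NonMoverWins.insert_own hn hfN hfsafe
      (hdead.mono (Finset.insert_subset_insert _ (Finset.subset_insert _ _)))
      (by rwa [Finset.insert_comm])
  rw [Finset.insert_comm] at hwin
  refine moverWins_iff.2 ⟨f, ?_, hfsafe, hwin⟩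
  simp only [mem_avail, Finset.mem_insert] at hf ⊢
  tauto
termination_by (avail own opp).card
decreasing_by exact (card_avail_insert_lt hf).trans (card_avail_insert_lt heavail)

end Game

section Relabelling

variable {n : ℕ} {S T own opp : Finset (Sym2 (Fin n))} {e : Sym2 (Fin n)}
  (σ : Equiv.Perm (Fin n))

theorem map_mem_image_map_iff : e.map σ ∈ S.image (Sym2.map σ) ↔ e ∈ S :=
  (Sym2.map.injective σ.injective).mem_finset_image

theorem hasTriangle_image_map_iff : HasTriangle (S.image (Sym2.map σ)) ↔ HasTriangle S := by
  have hmem (a b : Fin n) : s(σ a, σ b) ∈ S.image (Sym2.map σ) ↔ s(a, b) ∈ S :=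
    map_mem_image_map_iff (e := s(a, b)) σ
  rw [HasTriangle, σ.surjective.exists₃]
  simp only [HasTriangle, hmem, σ.injective.ne_iff]

theorem map_mem_avail_image_map_iff :
    e.map σ ∈ avail (S.image (Sym2.map σ)) (T.image (Sym2.map σ)) ↔ e ∈ avail S T := by
  simp only [mem_avail, map_mem_image_map_iff, Sym2.isDiag_map σ.injective]

theorem sym2Map_surjective : Function.Surjective (Sym2.map σ) := fun f =>
  ⟨f.map σ.symm, by simp [Sym2.map_map]⟩

variable {σ}

theorem avail_image_map_nonempty (h : (avail S T).Nonempty) :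
    (avail (S.image (Sym2.map σ)) (T.image (Sym2.map σ))).Nonempty :=
  h.imp' (Sym2.map σ) fun _ => (map_mem_avail_image_map_iff σ).2

theorem MoverWins.image_map (h : MoverWins own opp) :
    MoverWins (own.image (Sym2.map σ)) (opp.image (Sym2.map σ)) := by
  induction h with
  | step own opp e he hsafe hne _ ih =>
    refine .step _ _ (e.map σ) ((map_mem_avail_image_map_iff σ).2 he) ?_ ?_ ?_
    · rwa [← Finset.image_insert, hasTriangle_image_map_iff]
    · rw [← Finset.image_insert]
      exact avail_image_map_nonempty hne
    · refine (sym2Map_surjective σ).forall.2 fun f => ?_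
      simp only [← Finset.image_insert, map_mem_avail_image_map_iff, hasTriangle_image_map_iff]
      exact ih f

theorem NonMoverWins.image_map (h : NonMoverWins own opp) :
    NonMoverWins (own.image (Sym2.map σ)) (opp.image (Sym2.map σ)) := by
  refine ⟨avail_image_map_nonempty h.1, (sym2Map_surjective σ).forall.2 fun e => ?_⟩
  simp only [← Finset.image_insert, map_mem_avail_image_map_iff, hasTriangle_image_map_iff]
  exact fun he hsafe => (h.2 e he hsafe).image_map

end Relabelling

section ColorSwap

variable {n : ℕ} {σ : Equiv.Perm (Fin n)} {G R : Finset (Sym2 (Fin n))}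

/-- A color-exchanging symmetry of the position `(G, R)`: a permutation of the vertices mapping
the green edges onto the red ones and the red edges onto the green ones. -/
structure IsColorSwap (σ : Equiv.Perm (Fin n)) (G R : Finset (Sym2 (Fin n))) : Prop where
  image_green : G.image (Sym2.map σ) = R
  image_red : R.image (Sym2.map σ) = G

theorem IsColorSwap.moverWins_insert (hσ : IsColorSwap σ G R) (hn : 6 ≤ n) {e : Sym2 (Fin n)}
    (he : e ∈ avail G R) (hsafe : ¬ HasTriangle (insert e G))
    (hdead : HasTriangle (insert (e.map σ) (insert e G))) : MoverWins R (insert e G) := by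
  have image_insert_green : (insert e G).image (Sym2.map σ) = insert (e.map σ) R := by
    rw [Finset.image_insert, hσ.image_green]
  have hsafe' : ¬ HasTriangle (insert (e.map σ) R) := by
    rwa [← image_insert_green, hasTriangle_image_map_iff]
  have hR : ¬ HasTriangle R := fun h => hsafe' (h.mono (Finset.subset_insert _ _))
  refine (moverWins_or_nonMoverWins hn hR hsafe).resolve_right fun hN => ?_
  have green_wins : NonMoverWins (insert (e.map σ) R) (insert e G) :=
    NonMoverWins.insert_own hn hN hsafe hdead hsafe'
  have red_wins : NonMoverWins G (insert (e.map σ) R) := by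
    simpa only [hσ.image_red, image_insert_green] using hN.image_map (σ := σ)
  have hne : e ≠ e.map σ := by
    intro heq
    rw [← heq, Finset.insert_idem] at hdead
    exact hsafe hdead
  have he' : e ∈ avail G (insert (e.map σ) R) := by
    simp only [mem_avail, Finset.mem_insert] at he ⊢
    tauto
  exact (red_wins.2 e he' hsafe).not_nonMoverWins green_wins

end ColorSwap

section DrawnK5

variable {n : ℕ} {w : Fin 5 → Fin n} {σ : Equiv.Perm (Fin n)}

theorem mk_mem_greenK5_or_redK5 {x y : Fin 5} (hxy : x ≠ y) :
    s(w x, w y) ∈ greenK5 w ∨ s(w x, w y) ∈ redK5 w := by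
  have hcases : y = x + 1 ∨ x = y + 1 ∨ y = x + 2 ∨ x = y + 2 := by decide +revert
  simp only [greenK5, redK5, Finset.mem_image, Finset.mem_univ, true_and]
  rcases hcases with rfl | rfl | rfl | rfl
  · exact .inl ⟨x, rfl⟩
  · exact .inl ⟨y, Sym2.eq_swap⟩
  · exact .inr ⟨x, rfl⟩
  · exact .inr ⟨y, Sym2.eq_swap⟩

theorem exists_eq_mk_of_mem_greenK5_or_redK5 {e : Sym2 (Fin n)}
    (he : e ∈ greenK5 w ∨ e ∈ redK5 w) : ∃ x y, e = s(w x, w y) := by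
  simp only [greenK5, redK5, Finset.mem_image, Finset.mem_univ, true_and] at he
  obtain ⟨x, rfl⟩ | ⟨x, rfl⟩ := he
  exacts [⟨_, _, rfl⟩, ⟨_, _, rfl⟩]

/-- The relabelling `t ↦ 2 t + a` of a pentagon, which exchanges its sides (steps of `1`) and its
diagonals (steps of `2`) because `2 * 2 = -1` in `Fin 5`. -/
def doublingPerm (a : Fin 5) : Equiv.Perm (Fin 5) where
  toFun t := 2 * t + a
  invFun t := 3 * (t - a)
  left_inv t := by decide +revert
  right_inv t := by decide +revert

theorem doublingPerm_add_one (a t : Fin 5) : doublingPerm a (t + 1) = doublingPerm a t + 2 := by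
  decide +revert

theorem doublingPerm_eq_add_two_add_one (a t : Fin 5) :
    doublingPerm a t = doublingPerm a (t + 2) + 1 := by
  decide +revert

theorem doublingPerm_neg_self (x : Fin 5) : doublingPerm (-x) x = x := by
  decide +revert

theorem doublingPerm_one_sub_self (y : Fin 5) : doublingPerm (1 - y) y = y + 1 := by
  decide +revert

variable {a : Fin 5} (hσ : ∀ t, σ (w t) = w (doublingPerm a t))
include hσ

theorem image_greenK5 : (greenK5 w).image (Sym2.map σ) = redK5 w := by
  calc (greenK5 w).image (Sym2.map σ)
      = Finset.univ.image ((fun t => s(w t, w (t + 2))) ∘ doublingPerm a) := by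
        simp only [greenK5, Finset.image_image, Function.comp_def, Sym2.map_mk, hσ,
          doublingPerm_add_one]
    _ = redK5 w := by rw [← Finset.image_image, Finset.image_univ_equiv, redK5]

theorem image_redK5 : (redK5 w).image (Sym2.map σ) = greenK5 w := by
  let τ : Equiv.Perm (Fin 5) := (Equiv.addRight 2).trans (doublingPerm a)
  calc (redK5 w).image (Sym2.map σ)
      = Finset.univ.image ((fun t => s(w t, w (t + 1))) ∘ τ) := by
        simp only [redK5, Finset.image_image, Function.comp_def, Sym2.map_mk, hσ, τ,
          Equiv.trans_apply, Equiv.coe_addRight, ← doublingPerm_eq_add_two_add_one, Sym2.eq_swap]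
    _ = greenK5 w := by rw [← Finset.image_image, Finset.image_univ_equiv, greenK5]

end DrawnK5

section Blocks

variable {n : ℕ} {ι : Type*} {v : ι → Fin 5 → Fin n}

/-- The vertex permutation acting on each block `v i` as `doublingPerm (a i)` and fixing the
vertices outside the blocks. -/
noncomputable def blockDoublingPerm (hv : Function.Injective2 v) (a : ι → Fin 5) :
    Equiv.Perm (Fin n) :=
  Equiv.Perm.viaEmbedding (Equiv.prodCongrRight fun i => doublingPerm (a i))
    ⟨Function.uncurry v, hv.uncurry⟩

theorem blockDoublingPerm_apply (hv : Function.Injective2 v) (a : ι → Fin 5) (i : ι)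
    (t : Fin 5) : blockDoublingPerm hv a (v i t) = v i (doublingPerm (a i) t) :=
  Equiv.Perm.viaEmbedding_apply _ ⟨Function.uncurry v, hv.uncurry⟩ (i, t)

theorem blockDoublingPerm_apply_of_forall_ne (hv : Function.Injective2 v) (a : ι → Fin 5)
    {p : Fin n} (hp : ∀ i t, v i t ≠ p) : blockDoublingPerm hv a p = p :=
  Equiv.Perm.viaEmbedding_apply_of_notMem _ _ _ fun ⟨(i, t), hit⟩ => hp i t hit

variable [Fintype ι]

/-- The green edges of the position in which every block `v i` carries a drawn `K₅`. -/
def greenBlocks (v : ι → Fin 5 → Fin n) : Finset (Sym2 (Fin n)) :=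
  Finset.univ.biUnion fun i => greenK5 (v i)

/-- The red edges of the position in which every block `v i` carries a drawn `K₅`. -/
def redBlocks (v : ι → Fin 5 → Fin n) : Finset (Sym2 (Fin n)) :=
  Finset.univ.biUnion fun i => redK5 (v i)

theorem mem_greenBlocks {e : Sym2 (Fin n)} : e ∈ greenBlocks v ↔ ∃ i, e ∈ greenK5 (v i) := by
  simp [greenBlocks]

theorem mem_redBlocks {e : Sym2 (Fin n)} : e ∈ redBlocks v ↔ ∃ i, e ∈ redK5 (v i) := by
  simp [redBlocks]

theorem mk_mem_avail_blocks_iff (hv : Function.Injective2 v) {p : Fin n} {j : ι} {y : Fin 5} :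
    s(p, v j y) ∈ avail (greenBlocks v) (redBlocks v) ↔ ∀ x, v j x ≠ p := by
  rw [mk_mem_avail, mem_greenBlocks, mem_redBlocks, ← not_or, ← exists_or]
  constructor
  · rintro ⟨hne, hblock⟩ x rfl
    exact hblock ⟨j, mk_mem_greenK5_or_redK5 fun hxy => hne (hxy ▸ rfl)⟩
  · refine fun hp => ⟨(hp y).symm, fun ⟨i, hi⟩ => ?_⟩
    obtain ⟨a, b, hab⟩ := exists_eq_mk_of_mem_greenK5_or_redK5 hi
    obtain ⟨rfl, hy⟩ | ⟨rfl, hy⟩ := Sym2.eq_iff.1 hab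
    · exact hp a (by rw [(hv hy).1])
    · exact hp b (by rw [(hv hy).1])

theorem exists_block_eq_or_eq (hv : Function.Injective2 v) (hn : n ≤ 5 * Fintype.card ι + 1)
    {p q : Fin n} (hpq : p ≠ q) : (∃ i x, v i x = p) ∨ ∃ i x, v i x = q := by
  by_contra! ⟨hp, hq⟩
  let blocks : Finset (Fin n) := Finset.univ.image (Function.uncurry v)
  have hcard : blocks.card = Fintype.card ι * 5 := by
    rw [Finset.card_image_of_injective _ hv.uncurry, Finset.card_univ, Fintype.card_prod,
      Fintype.card_fin]
  have hq' : q ∉ blocks := by simpa [blocks] using hq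
  have hp' : p ∉ insert q blocks := by simpa [blocks, hpq] using hp
  have hle := Finset.card_le_univ (insert p (insert q blocks))
  rw [Finset.card_insert_of_notMem hp', Finset.card_insert_of_notMem hq', Fintype.card_fin] at hle
  omega

theorem exists_eq_mk_of_mem_avail_blocks (hv : Function.Injective2 v)
    (hn : n ≤ 5 * Fintype.card ι + 1) {e : Sym2 (Fin n)}
    (he : e ∈ avail (greenBlocks v) (redBlocks v)) :
    ∃ p j y, (∀ x, v j x ≠ p) ∧ e = s(p, v j y) := by
  induction e with | _ p q
  obtain ⟨j, y, rfl⟩ | ⟨j, y, rfl⟩ := exists_block_eq_or_eq hv hn (mk_mem_avail.1 he).1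
  · rw [Sym2.eq_swap] at he ⊢
    exact ⟨q, j, y, (mk_mem_avail_blocks_iff hv).1 he, rfl⟩
  · exact ⟨p, j, y, (mk_mem_avail_blocks_iff hv).1 he, rfl⟩

theorem avail_blocks_nonempty (hv : Function.Injective2 v) [Nonempty ι] (hn : 6 ≤ n) :
    (avail (greenBlocks v) (redBlocks v)).Nonempty := by
  obtain ⟨j⟩ := ‹Nonempty ι›
  have hcard : (Finset.univ.image (v j)).card < (Finset.univ : Finset (Fin n)).card :=
    Finset.card_image_le.trans_lt (by simpa using Nat.lt_of_succ_le hn)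
  obtain ⟨p, -, hp⟩ := Finset.exists_mem_notMem_of_card_lt_card hcard
  exact ⟨s(p, v j 0), (mk_mem_avail_blocks_iff hv).2 (by simpa using hp)⟩

theorem isColorSwap_blocks {σ : Equiv.Perm (Fin n)} {a : ι → Fin 5}
    (hσ : ∀ i t, σ (v i t) = v i (doublingPerm (a i) t)) :
    IsColorSwap σ (greenBlocks v) (redBlocks v) where
  image_green := by
    simp only [greenBlocks, redBlocks, Finset.biUnion_image, image_greenK5 (hσ _)]
  image_red := by
    simp only [greenBlocks, redBlocks, Finset.biUnion_image, image_redK5 (hσ _)]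

theorem exists_isColorSwap_blocks (hv : Function.Injective2 v) {p : Fin n} {j : ι}
    (hp : ∀ x, v j x ≠ p) (y : Fin 5) :
    ∃ σ, IsColorSwap σ (greenBlocks v) (redBlocks v) ∧ σ p = p ∧ σ (v j y) = v j (y + 1) := by
  classical
  suffices ∃ c, blockDoublingPerm hv (Function.update (fun _ => c) j (1 - y)) p = p by
    obtain ⟨c, hc⟩ := this
    refine ⟨_, isColorSwap_blocks (blockDoublingPerm_apply hv _), hc, ?_⟩
    rw [blockDoublingPerm_apply, Function.update_self, doublingPerm_one_sub_self]
  by_cases hblock : ∃ i x, v i x = p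
  · obtain ⟨i, x, rfl⟩ := hblock
    have hij : i ≠ j := by
      rintro rfl
      exact hp x rfl
    refine ⟨-x, ?_⟩
    rw [blockDoublingPerm_apply, Function.update_of_ne hij, doublingPerm_neg_self]
  · push Not at hblock
    exact ⟨0, blockDoublingPerm_apply_of_forall_ne hv _ hblock⟩

theorem hasTriangle_insert_insert_greenBlocks {j : ι} (hv : Function.Injective (v j)) {p : Fin n}
    (hp : ∀ x, v j x ≠ p) (y : Fin 5) :
    HasTriangle (insert s(p, v j (y + 1)) (insert s(p, v j y) (greenBlocks v))) := by
  have hside : s(v j y, v j (y + 1)) ∈ greenBlocks v :=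
    mem_greenBlocks.2 ⟨j, Finset.mem_image_of_mem _ (Finset.mem_univ y)⟩
  have hne : v j y ≠ v j (y + 1) := fun h => by simpa using hv h
  exact ⟨p, v j y, v j (y + 1), (hp _).symm, (hp _).symm, hne, by simp, by simp, by simp [hside]⟩

-- At most one vertex lies outside the blocks, so every uncolored edge has an endpoint in a block,
-- which a color swap can move while fixing the other endpoint.
theorem drawn_K5_partition_secondPlayerWin_general (hv : Function.Injective2 v) (hn : 6 ≤ n)
    (hcard : n ≤ 5 * Fintype.card ι + 1) : NonMoverWins (greenBlocks v) (redBlocks v) := by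
  have : Nonempty ι := Fintype.card_pos_iff.1 (by omega)
  refine ⟨avail_blocks_nonempty hv hn, fun e he hsafe => ?_⟩
  obtain ⟨p, j, y, hp, rfl⟩ := exists_eq_mk_of_mem_avail_blocks hv hcard he
  obtain ⟨σ, hσ, hσp, hσy⟩ := exists_isColorSwap_blocks hv hp y
  refine hσ.moverWins_insert hn he hsafe ?_
  rw [Sym2.map_mk, hσp, hσy]
  exact hasTriangle_insert_insert_greenBlocks (hv.right j) hp y

end Blocks

/-- **Theorem 1.** Let `n = 5k` with `k ≥ 2`. If the `n` vertices are
partitioned into `k` blocks of five (given by the injective map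
`(i, j) ↦ v i j`, which is bijective since `n = 5k`), each block carries a
drawn `K₅`, all edges between blocks are uncolored, and PI (green) is to move,
then PII (red, the non-mover) has a winning strategy. -/
theorem drawn_K5_partition_secondPlayerWin (k : ℕ) (hk : 2 ≤ k) (n : ℕ) (hn : n = 5 * k)
    (v : Fin k → Fin 5 → Fin n)
    (hv : Function.Injective (fun p : Fin k × Fin 5 => v p.1 p.2)) :
    NonMoverWins (Finset.univ.biUnion fun i => greenK5 (v i))
      (Finset.univ.biUnion fun i => redK5 (v i)) := by
  have hv₂ : Function.Injective2 v := fun _ _ _ _ h => Prod.mk.inj (hv h)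
  exact drawn_K5_partition_secondPlayerWin_general hv₂ (by omega) (by simp [hn])
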